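/- arXiv:1911.03718 — 2 statements merged into one kernel-verified Lean document; each statement's English description precedes it below -/
import Mathlib

section
/- For every k > 0 and every x ∈ ℝ³ with |x| > 1, ∫_{S²} ( k² G^k(x−y) y + (Hess G^k)(x−y) y ) dσ(y) = 0. (That is, the outward unit normal ν_y = y of the unit sphere lies in the kernel of the shear part of the elastic single layer potential on S², for every shear wavenumber k.) -/
open MeasureTheory

noncomputable section

/-- The fundamental solution `G^k(z) = -e^{ik|z|}/(4π|z|)` of the Helmholtz operator
`Δ + k²` in `ℝ³`. -/
noncomputable def G (k : ℂ) (z : EuclideanSpace ℝ (Fin 3)) : ℂ :=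
  -Complex.exp (Complex.I * k * ‖z‖) / (4 * Real.pi * ‖z‖ : ℝ)

/-- The `(i,j)` entry of the Hessian matrix of second partial derivatives of `G^k`. -/
noncomputable def HessG (k : ℂ) (z : EuclideanSpace ℝ (Fin 3)) (i j : Fin 3) : ℂ :=
  fderiv ℝ (fun v => fderiv ℝ (G k) v (EuclideanSpace.single j 1)) z
    (EuclideanSpace.single i 1)

/-- The surface measure on the unit sphere `S² ⊂ ℝ³`: the 2-dimensional Hausdorff
measure restricted to the sphere. -/
noncomputable def sphMeasure : Measure (EuclideanSpace ℝ (Fin 3)) :=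
  (Measure.hausdorffMeasure 2).restrict (Metric.sphere (0 : EuclideanSpace ℝ (Fin 3)) 1)

/-!
Since `Δ G = -k² G` away from the origin, row `i` of the integrand, written for the function
`u y = G k (x - y)`, is `Hess u (e i, y) - y i * Δ u y`. This equals
`∑ j, (y j ∂ i - y i ∂ j) (∂ j u) y`, a sum of derivatives of the functions `∂ j u` along the
rotation fields `y j ∂ i - y i ∂ j`. The surface measure is invariant under the rotations
`exp (t A)` with `A` skew-adjoint, so `t ↦ ∫ f (exp (t A) y)` is constant, and differentiating it
at `t = 0` shows that each of those derivatives integrates to zero.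
-/

open Filter InnerProductSpace Metric Module
open scoped Laplacian RealInnerProductSpace Topology

section HausdorffMeasure

variable {E : Type*} [NormedAddCommGroup E] [InnerProductSpace ℝ E]

lemma norm_stereoToFun_le {v x : E} (hvx : ⟪v, x⟫ ≤ 0) : ‖stereoToFun v x‖ ≤ 2 * ‖x‖ := by
  have hscale : ‖2 / (1 - ⟪v, x⟫)‖ ≤ 2 := by
    rw [Real.norm_of_nonneg (div_nonneg zero_le_two (by linarith))]
    exact div_le_self zero_le_two (by linarith)
  rw [stereoToFun_apply, innerSL_apply_apply, norm_smul]
  gcongr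
  exact Submodule.norm_orthogonalProjectionOnto_apply_le _ x

lemma mem_image_stereoInvFunAux_closedBall {v x : E} (hv : ‖v‖ = 1) (hx : ‖x‖ = 1)
    (hvx : ⟪v, x⟫ ≤ 0) :
    x ∈ (fun w : (ℝ ∙ v)ᗮ ↦ stereoInvFunAux v w) '' closedBall 0 2 := by
  have hne : x ≠ v := by
    rintro rfl
    norm_num [hx] at hvx
  have hball : stereoToFun v x ∈ closedBall 0 2 := by
    simpa [hx] using norm_stereoToFun_le hvx
  exact ⟨_, hball, congrArg Subtype.val (stereo_left_inv hv (x := ⟨x, by simpa using hx⟩) hne)⟩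

variable [FiniteDimensional ℝ E] [MeasurableSpace E] [BorelSpace E]

lemma hausdorffMeasure_image_lt_top {F : Type*} [NormedAddCommGroup F] [NormedSpace ℝ F]
    [MeasurableSpace F] [BorelSpace F] {f : E → F} (hf : ContDiff ℝ 1 f) {K : Set E}
    (hK : IsCompact K) (hconvex : Convex ℝ K) : μH[finrank ℝ E] (f '' K) < ⊤ := by
  obtain ⟨C, hC⟩ := hf.contDiffOn.exists_lipschitzOnWith one_ne_zero hconvex hK
  calc μH[finrank ℝ E] (f '' K)
      ≤ (C : ENNReal) ^ (finrank ℝ E : ℝ) * μH[finrank ℝ E] K :=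
        hC.hausdorffMeasure_image_le (Nat.cast_nonneg _)
    _ < ⊤ := ENNReal.mul_lt_top
        (ENNReal.rpow_lt_top_of_nonneg (Nat.cast_nonneg _) ENNReal.coe_ne_top) hK.measure_lt_top

-- The inverse stereographic projections from two opposite poles each cover a hemisphere.
lemma hausdorffMeasure_sphere_lt_top (n : ℕ) [hn : Fact (finrank ℝ E = n + 1)] :
    μH[n] (sphere (0 : E) 1) < ⊤ := by
  have : Nontrivial E := nontrivial_of_finrank_pos (R := ℝ) (hn.out ▸ n.succ_pos)
  obtain ⟨v, hv⟩ := exists_norm_eq E zero_le_one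
  have hemisphere_lt_top (u : E) (hu : ‖u‖ = 1) :
      μH[n] ((fun w : (ℝ ∙ u)ᗮ ↦ stereoInvFunAux u w) '' closedBall 0 2) < ⊤ := by
    have hu_ne : u ≠ 0 := norm_ne_zero_iff.1 (by simp [hu])
    rw [← Submodule.finrank_orthogonal_span_singleton (𝕜 := ℝ) (n := n) hu_ne]
    exact hausdorffMeasure_image_lt_top
      (contDiff_stereoInvFunAux.comp (ℝ ∙ u)ᗮ.subtypeL.contDiff)
      (isCompact_closedBall _ _) (convex_closedBall _ _)
  have hneg : ‖-v‖ = 1 := by rwa [norm_neg]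
  refine (measure_mono fun x hx ↦ ?_).trans_lt
    (measure_union_lt_top (hemisphere_lt_top v hv) (hemisphere_lt_top (-v) hneg))
  have hx_norm : ‖x‖ = 1 := by simpa using hx
  rcases le_total ⟪v, x⟫ 0 with hvx | hvx
  · exact .inl (mem_image_stereoInvFunAux_closedBall hv hx_norm hvx)
  · exact .inr (mem_image_stereoInvFunAux_closedBall hneg hx_norm (by simpa using hvx))

end HausdorffMeasure

section ContinuousOn

lemma integrable_of_continuousOn_isCompact {X F : Type*} [TopologicalSpace X] [T2Space X]
    [MeasurableSpace X] [OpensMeasurableSpace X] [NormedAddCommGroup F]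
    {μ : Measure X} [IsFiniteMeasure μ] {s : Set X} (hs : IsCompact s) (hμ : ∀ᵐ x ∂μ, x ∈ s)
    {g : X → F} (hg : ContinuousOn g s) : Integrable g μ := by
  rw [← Measure.restrict_eq_self_of_ae_mem hμ]
  exact hg.integrableOn_compact hs

lemma continuousOn_fderiv_apply {E F : Type*} [NormedAddCommGroup E] [NormedSpace ℝ E]
    [NormedAddCommGroup F] [NormedSpace ℝ F] {f : E → F} {s : Set E}
    (hf : ∀ y ∈ s, ContDiffAt ℝ 1 f y) (A : E →L[ℝ] E) :
    ContinuousOn (fun y ↦ fderiv ℝ f y (A y)) s := fun y hy ↦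
  (((hf y hy).fderiv_right (m := 0) (by simp)).continuousAt.clm_apply
    A.continuous.continuousAt).continuousWithinAt

end ContinuousOn

section Rotations

variable {E : Type*} [NormedAddCommGroup E] [InnerProductSpace ℝ E]

/-- The rotation field `y ↦ ⟪v, y⟫ u - ⟪u, y⟫ v`, which generates the rotations in the plane
spanned by `u` and `v` when these are orthonormal. -/
def rotationField (u v : E) : E →L[ℝ] E :=
  rankOne ℝ u v - rankOne ℝ v u

lemma rotationField_apply (u v y : E) : rotationField u v y = ⟪v, y⟫ • u - ⟪u, y⟫ • v := rfl

variable [CompleteSpace E]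

lemma rotationField_mem_skewAdjoint (u v : E) : rotationField u v ∈ skewAdjoint (E →L[ℝ] E) := by
  simp [rotationField, skewAdjoint.mem_iff, ContinuousLinearMap.star_eq_adjoint]

/-- The one-parameter group `t ↦ exp (t A)` of linear isometries generated by a skew-adjoint
operator `A`. -/
def expIsometry {A : E →L[ℝ] E} (hA : A ∈ skewAdjoint (E →L[ℝ] E)) (t : ℝ) : E ≃ₗᵢ[ℝ] E :=
  letI : NormedAlgebra ℚ (E →L[ℝ] E) := .restrictScalars ℚ ℝ _
  Unitary.linearIsometryEquiv
    ⟨_, NormedSpace.exp_mem_unitary_of_mem_skewAdjoint (skewAdjoint.smul_mem t hA)⟩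

lemma expIsometry_apply {A : E →L[ℝ] E} (hA : A ∈ skewAdjoint (E →L[ℝ] E)) (t : ℝ) (y : E) :
    expIsometry hA t y = NormedSpace.exp (t • A) y := rfl

lemma expIsometry_zero_apply {A : E →L[ℝ] E} (hA : A ∈ skewAdjoint (E →L[ℝ] E)) (y : E) :
    expIsometry hA 0 y = y := by
  simp [expIsometry_apply]

lemma hasDerivAt_expIsometry {A : E →L[ℝ] E} (hA : A ∈ skewAdjoint (E →L[ℝ] E)) (t : ℝ) (y : E) :
    HasDerivAt (fun s ↦ expIsometry hA s y) (A (expIsometry hA t y)) t := by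
  simpa [expIsometry_apply] using
    (hasDerivAt_exp_smul_const' A t).clm_apply (hasDerivAt_const t y)

end Rotations

section InvariantMeasure

variable {E F : Type*} [NormedAddCommGroup E] [InnerProductSpace ℝ E] [FiniteDimensional ℝ E]
  [NormedAddCommGroup F] [NormedSpace ℝ F]

lemma hessian_sub_laplacian_eq_sum_rotationField {ι : Type*} [Fintype ι]
    (b : OrthonormalBasis ι ℝ E) {u : E → F} {y : E} (hu : ContDiffAt ℝ 2 u y) (v : E) :
    fderiv ℝ (fderiv ℝ u) y v y - ⟪v, y⟫ • Δ u y =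
      ∑ j, fderiv ℝ (fun w ↦ fderiv ℝ u w (b j)) y (rotationField v (b j) y) := by
  have hdiff : DifferentiableAt ℝ (fderiv ℝ u) y :=
    (hu.fderiv_right (m := 1) (by norm_num)).differentiableAt one_ne_zero
  have hexpand : fderiv ℝ (fderiv ℝ u) y v y =
      ∑ j, ⟪b j, y⟫ • fderiv ℝ (fderiv ℝ u) y v (b j) := by
    simpa using (congrArg (fderiv ℝ (fderiv ℝ u) y v) (b.sum_repr' y)).symm
  simp [hexpand, laplacian_eq_iteratedFDeriv_orthonormalBasis u b, iteratedFDeriv_two_apply,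
    fderiv_clm_apply hdiff (differentiableAt_const _), rotationField_apply, Finset.smul_sum]

variable [MeasurableSpace E] [BorelSpace E] {μ : Measure E} [IsFiniteMeasure μ] {r : ℝ}

lemma integral_fderiv_skewAdjoint_eq_zero (hμ : ∀ᵐ y ∂μ, y ∈ sphere 0 r)
    (hinv : ∀ e : E ≃ₗᵢ[ℝ] E, MeasurePreserving e μ μ) {f : E → F}
    (hf : ∀ y ∈ sphere 0 r, ContDiffAt ℝ 1 f y) {A : E →L[ℝ] E}
    (hA : A ∈ skewAdjoint (E →L[ℝ] E)) : ∫ y, fderiv ℝ f y (A y) ∂μ = 0 := by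
  let R := expIsometry hA
  have hR_mem {y : E} (hy : y ∈ sphere 0 r) (t : ℝ) : R t y ∈ sphere 0 r := by simpa using hy
  have integrable_comp_R {g : E → F} (hg : ContinuousOn g (sphere 0 r)) (t : ℝ) :
      Integrable (fun y ↦ g (R t y)) μ :=
    integrable_of_continuousOn_isCompact (isCompact_sphere 0 r) hμ
      (hg.comp (R t).continuous.continuousOn fun _ hy ↦ hR_mem hy t)
  have hf_cont : ContinuousOn f (sphere 0 r) := fun y hy ↦
    (hf y hy).continuousAt.continuousWithinAt
  have hf'_cont := continuousOn_fderiv_apply hf A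
  obtain ⟨C, hC⟩ := (isCompact_sphere 0 r).exists_bound_of_continuousOn hf'_cont
  have hderiv : HasDerivAt (fun t ↦ ∫ y, f (R t y) ∂μ)
      (∫ y, fderiv ℝ f (R 0 y) (A (R 0 y)) ∂μ) 0 :=
    (hasDerivAt_integral_of_dominated_loc_of_deriv_le
      (F' := fun t y ↦ fderiv ℝ f (R t y) (A (R t y))) (bound := fun _ ↦ C) univ_mem
      (.of_forall fun t ↦ (integrable_comp_R hf_cont t).aestronglyMeasurable)
      (integrable_comp_R hf_cont 0) (integrable_comp_R hf'_cont 0).aestronglyMeasurable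
      (hμ.mono fun y hy t _ ↦ hC _ (hR_mem hy t)) (integrable_const C)
      (hμ.mono fun y hy t _ ↦ ((hf _ (hR_mem hy t)).differentiableAt
        one_ne_zero).hasFDerivAt.comp_hasDerivAt t (hasDerivAt_expIsometry hA t y))).2
  have hconst (t : ℝ) : ∫ y, f (R t y) ∂μ = ∫ y, f y ∂μ :=
    (hinv (R t)).integral_comp (R t).toHomeomorph.measurableEmbedding f
  simp only [hconst, R, expIsometry_zero_apply] at hderiv
  exact hderiv.unique (hasDerivAt_const _ _)

theorem integral_hessian_sub_laplacian_eq_zero (hμ : ∀ᵐ y ∂μ, y ∈ sphere 0 r)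
    (hinv : ∀ e : E ≃ₗᵢ[ℝ] E, MeasurePreserving e μ μ) {u : E → F}
    (hu : ∀ y ∈ sphere 0 r, ContDiffAt ℝ 2 u y) (v : E) :
    ∫ y, (fderiv ℝ (fderiv ℝ u) y v y - ⟪v, y⟫ • Δ u y) ∂μ = 0 := by
  let b := stdOrthonormalBasis ℝ E
  have hpartial (j) : ∀ y ∈ sphere 0 r, ContDiffAt ℝ 1 (fun w ↦ fderiv ℝ u w (b j)) y :=
    fun y hy ↦ ((hu y hy).fderiv_right (by norm_num)).clm_apply contDiffAt_const
  rw [integral_congr_ae (hμ.mono fun y hy ↦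
      hessian_sub_laplacian_eq_sum_rotationField b (hu y hy) v),
    integral_finsetSum _ fun j _ ↦ integrable_of_continuousOn_isCompact (isCompact_sphere 0 r) hμ
      (continuousOn_fderiv_apply (hpartial j) _)]
  exact Finset.sum_eq_zero fun j _ ↦
    integral_fderiv_skewAdjoint_eq_zero hμ hinv (hpartial j) (rotationField_mem_skewAdjoint v _)

end InvariantMeasure

section RadialFunctions

variable {E F : Type*} [NormedAddCommGroup E] [InnerProductSpace ℝ E] [NormedAddCommGroup F]
  [NormedSpace ℝ F] {z : E}

lemma hasFDerivAt_norm_of_ne_zero (hz : z ≠ 0) :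
    HasFDerivAt (fun x : E ↦ ‖x‖) (‖z‖⁻¹ • innerSL ℝ z) z := by
  have hsqrt := (hasStrictFDerivAt_norm_sq z).hasFDerivAt.sqrt (by positivity)
  simp only [Real.sqrt_sq (norm_nonneg _)] at hsqrt
  exact hsqrt.congr_fderiv (by module)

lemma hasFDerivAt_comp_norm {p : ℝ → F} {p' : F} (hz : z ≠ 0) (hp : HasDerivAt p p' ‖z‖) :
    HasFDerivAt (fun x : E ↦ p ‖x‖) ((innerSL ℝ z).smulRight (‖z‖⁻¹ • p')) z := by
  refine (hp.hasFDerivAt.comp z (hasFDerivAt_norm_of_ne_zero hz)).congr_fderiv ?_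
  ext v
  simp [smul_smul, mul_comm]

lemma fderiv_fderiv_comp_norm {p p' : ℝ → F} {p'' : F} (hz : z ≠ 0)
    (hp : ∀ᶠ r in 𝓝 ‖z‖, HasDerivAt p (p' r) r) (hp' : HasDerivAt p' p'' ‖z‖) (v w : E) :
    fderiv ℝ (fderiv ℝ fun x : E ↦ p ‖x‖) z v w = ⟪v, w⟫ • ‖z‖⁻¹ • p' ‖z‖ +
      (⟪z, v⟫ * ⟪z, w⟫) • ‖z‖⁻¹ ^ 2 • (p'' - ‖z‖⁻¹ • p' ‖z‖) := by
  have hgrad : fderiv ℝ (fun x : E ↦ p ‖x‖) =ᶠ[𝓝 z]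
      fun x ↦ (innerSL ℝ x).smulRight (‖x‖⁻¹ • p' ‖x‖) := by
    filter_upwards [continuous_norm.continuousAt.eventually hp, isOpen_ne.mem_nhds hz]
      with x hx hx_ne
    exact (hasFDerivAt_comp_norm hx_ne hx).fderiv
  have hhess := (ContinuousLinearMap.smulRightL ℝ E F).hasFDerivAt_of_bilinear
    (innerSL ℝ).hasFDerivAt
    (hasFDerivAt_comp_norm hz ((hasDerivAt_inv (norm_ne_zero_iff.2 hz)).smul hp'))
  calc fderiv ℝ (fderiv ℝ fun x : E ↦ p ‖x‖) z v w
      = ⟪z, w⟫ • ⟪z, v⟫ • ‖z‖⁻¹ • (‖z‖⁻¹ • p'' + -(‖z‖ ^ 2)⁻¹ • p' ‖z‖) +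
          ⟪v, w⟫ • ‖z‖⁻¹ • p' ‖z‖ := by
        rw [hgrad.fderiv_eq]
        exact DFunLike.congr_fun (DFunLike.congr_fun hhess.fderiv v) w
    _ = _ := by module

theorem laplacian_comp_norm [FiniteDimensional ℝ E] {p p' : ℝ → F} {p'' : F} (hz : z ≠ 0)
    (hp : ∀ᶠ r in 𝓝 ‖z‖, HasDerivAt p (p' r) r) (hp' : HasDerivAt p' p'' ‖z‖) :
    Δ (fun x : E ↦ p ‖x‖) z = p'' + ((finrank ℝ E - 1) * ‖z‖⁻¹) • p' ‖z‖ := by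
  have hradial : ‖z‖ ^ 2 • ‖z‖⁻¹ ^ 2 • (p'' - ‖z‖⁻¹ • p' ‖z‖) = p'' - ‖z‖⁻¹ • p' ‖z‖ := by
    rw [smul_smul, ← mul_pow, mul_inv_cancel₀ (norm_ne_zero_iff.2 hz), one_pow, one_smul]
  simp only [laplacian_eq_iteratedFDeriv_stdOrthonormalBasis, iteratedFDeriv_two_apply,
    Matrix.cons_val_zero, Matrix.cons_val_one, fderiv_fderiv_comp_norm hz hp hp',
    Finset.sum_add_distrib, ← Finset.sum_smul, ← pow_two, OrthonormalBasis.sum_sq_inner_left,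
    hradial, real_inner_self_eq_norm_sq, OrthonormalBasis.norm_eq_one, one_pow, Finset.sum_const,
    Finset.card_univ, Fintype.card_fin, nsmul_eq_mul, mul_one]
  module

end RadialFunctions

section ReflectedTranslate

variable {E F : Type*} [NormedAddCommGroup E] [NormedAddCommGroup F] [NormedSpace ℝ F]

lemma fderiv_comp_const_sub [NormedSpace ℝ E] (f : E → F) (x : E) :
    fderiv ℝ (fun y ↦ f (x - y)) = fun y ↦ -fderiv ℝ f (x - y) := by
  ext1 y
  simpa [fderiv_comp_add_left, ← sub_eq_add_neg] using
    fderiv_comp_smul (f := fun w ↦ f (x + w)) (x := y) (-1 : ℝ)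

lemma fderiv_fderiv_comp_const_sub [NormedSpace ℝ E] (f : E → F) (x y : E) :
    fderiv ℝ (fderiv ℝ fun w ↦ f (x - w)) y = fderiv ℝ (fderiv ℝ f) (x - y) := by
  rw [fderiv_comp_const_sub, fderiv_fun_neg, fderiv_comp_const_sub, neg_neg]

lemma laplacian_comp_const_sub [InnerProductSpace ℝ E] [FiniteDimensional ℝ E] (f : E → F)
    (x y : E) : Δ (fun w ↦ f (x - w)) y = Δ f (x - y) := by
  simp only [laplacian_eq_iteratedFDeriv_stdOrthonormalBasis, iteratedFDeriv_two_apply,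
    fderiv_fderiv_comp_const_sub]

end ReflectedTranslate

section HelmholtzFundamentalSolution

/-- The radial profile `r ↦ exp (i k r) / r ^ n`. The case `n = 1` is that of `G k`, up to the
factor `-1 / (4 π)`, and the other cases occur in its radial derivatives. -/
def waveProfile (k : ℂ) (n : ℕ) (r : ℝ) : ℂ :=
  Complex.exp (Complex.I * k * r) / (r : ℂ) ^ n

lemma waveProfile_succ (k : ℂ) (n : ℕ) (r : ℝ) :
    waveProfile k (n + 1) r = r⁻¹ • waveProfile k n r := by
  simp only [waveProfile, pow_succ, Complex.real_smul, Complex.ofReal_inv]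
  ring

lemma hasDerivAt_waveProfile (k : ℂ) (n : ℕ) {r : ℝ} (hr : r ≠ 0) :
    HasDerivAt (waveProfile k n)
      (Complex.I * k * waveProfile k n r - n * waveProfile k (n + 1) r) r := by
  have hr' : (r : ℂ) ≠ 0 := mod_cast hr
  have hid : HasDerivAt (fun s : ℝ ↦ (s : ℂ)) 1 r := Complex.ofRealCLM.hasDerivAt
  refine ((hid.const_mul (Complex.I * k)).cexp.div (hid.fun_pow n)
    (pow_ne_zero n hr')).congr_deriv ?_
  rcases n with _ | n
  · simp [waveProfile, mul_comm]
  · simp only [waveProfile, Nat.add_sub_cancel, Nat.cast_add, Nat.cast_one]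
    field_simp
    ring

lemma G_eq_waveProfile (k : ℂ) : G k = fun z ↦ -(4 * Real.pi : ℂ)⁻¹ * waveProfile k 1 ‖z‖ := by
  ext z
  simp only [G, waveProfile, pow_one, Complex.ofReal_mul, Complex.ofReal_ofNat]
  ring

variable {z : EuclideanSpace ℝ (Fin 3)}

lemma contDiffAt_G {n : WithTop ℕ∞} (k : ℂ) (hz : z ≠ 0) : ContDiffAt ℝ n (G k) z := by
  have hnorm : ContDiffAt ℝ n (fun w : EuclideanSpace ℝ (Fin 3) ↦ (‖w‖ : ℂ)) z :=
    Complex.ofRealCLM.contDiff.contDiffAt.comp z (contDiffAt_norm ℝ hz)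
  have hnorm_ne : (‖z‖ : ℂ) ^ 1 ≠ 0 := by simpa using hz
  simp only [G_eq_waveProfile, waveProfile, div_eq_mul_inv]
  exact contDiffAt_const.mul
    ((contDiffAt_const.mul hnorm).cexp.mul ((hnorm.pow 1).inv hnorm_ne))

theorem laplacian_G (k : ℂ) (hz : z ≠ 0) : Δ (G k) z = -k ^ 2 * G k z := by
  have hderiv (n : ℕ) {r : ℝ} (hr : r ≠ 0) := hasDerivAt_waveProfile k n hr
  have hz_norm : ‖z‖ ≠ 0 := norm_ne_zero_iff.2 hz
  have hfirst : ∀ᶠ r in 𝓝 ‖z‖, HasDerivAt (fun r ↦ -(4 * Real.pi : ℂ)⁻¹ * waveProfile k 1 r)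
      (-(4 * Real.pi : ℂ)⁻¹ *
        (Complex.I * k * waveProfile k 1 r - (1 : ℕ) * waveProfile k 2 r)) r := by
    filter_upwards [isOpen_ne.mem_nhds hz_norm] with r hr
    exact (hderiv 1 hr).const_mul _
  have hsecond := (((hderiv 1 hz_norm).const_mul (Complex.I * k)).sub
    ((hderiv 2 hz_norm).const_mul ((1 : ℕ) : ℂ))).const_mul (-(4 * Real.pi : ℂ)⁻¹)
  rw [G_eq_waveProfile, laplacian_comp_norm hz hfirst hsecond]
  simp only [waveProfile_succ, finrank_euclideanSpace_fin, Complex.real_smul]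
  push_cast
  ring_nf
  simp only [Complex.I_sq]
  ring

lemma HessG_eq_fderiv_fderiv (k : ℂ) (hz : z ≠ 0) (i j : Fin 3) :
    HessG k z i j =
      fderiv ℝ (fderiv ℝ (G k)) z (EuclideanSpace.single i 1) (EuclideanSpace.single j 1) := by
  have hdiff : DifferentiableAt ℝ (fderiv ℝ (G k)) z :=
    ((contDiffAt_G k hz).fderiv_right (m := 1) (n := 2) (by norm_num)).differentiableAt one_ne_zero
  simp [HessG, fderiv_clm_apply hdiff (differentiableAt_const _)]

lemma sum_HessG_mul (k : ℂ) (hz : z ≠ 0) (i : Fin 3) (y : EuclideanSpace ℝ (Fin 3)) :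
    ∑ j, HessG k z i j * (y j : ℂ) =
      fderiv ℝ (fderiv ℝ (G k)) z (EuclideanSpace.single i 1) y := by
  have hy := (EuclideanSpace.basisFun (Fin 3) ℝ).sum_repr y
  simpa [HessG_eq_fderiv_fderiv k hz, mul_comm] using
    congrArg (fderiv ℝ (fderiv ℝ (G k)) z (EuclideanSpace.single i 1)) hy

end HelmholtzFundamentalSolution

section SurfaceMeasure

instance : IsFiniteMeasure sphMeasure where
  measure_univ_lt_top := by
    have : Fact (finrank ℝ (EuclideanSpace ℝ (Fin 3)) = 2 + 1) := ⟨by simp⟩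
    simpa [sphMeasure] using hausdorffMeasure_sphere_lt_top (E := EuclideanSpace ℝ (Fin 3)) 2

lemma ae_mem_sphere : ∀ᵐ y ∂sphMeasure, y ∈ sphere 0 1 :=
  ae_restrict_mem isClosed_sphere.measurableSet

lemma measurePreserving_sphMeasure
    (e : EuclideanSpace ℝ (Fin 3) ≃ₗᵢ[ℝ] EuclideanSpace ℝ (Fin 3)) :
    MeasurePreserving e sphMeasure sphMeasure := by
  have hsphere : e ⁻¹' sphere 0 1 = sphere 0 1 := by ext; simp
  have hrestrict := (e.toIsometryEquiv.measurePreserving_hausdorffMeasure 2).restrict_preimage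
    (s := sphere 0 1) isClosed_sphere.measurableSet
  simpa only [sphMeasure, LinearIsometryEquiv.coe_toIsometryEquiv, hsphere] using hrestrict

end SurfaceMeasure

theorem normal_in_kernel_of_shear_single_layer_general
    (k : ℂ) {x : EuclideanSpace ℝ (Fin 3)} (hx : ‖x‖ ≠ 1) (i : Fin 3) :
    ∫ y, (k ^ 2 * G k (x - y) * (y i : ℂ)
      + ∑ j : Fin 3, HessG k (x - y) i j * (y j : ℂ)) ∂sphMeasure = 0 := by
  have hne {y : EuclideanSpace ℝ (Fin 3)} (hy : y ∈ sphere 0 1) : x - y ≠ 0 := by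
    intro hxy
    exact hx (by simpa [sub_eq_zero.1 hxy] using hy)
  have hsmooth : ∀ y ∈ sphere 0 1, ContDiffAt ℝ 2 (fun w ↦ G k (x - w)) y := fun y hy ↦
    (contDiffAt_G k (hne hy)).comp y (contDiffAt_const.sub contDiffAt_id)
  rw [← integral_hessian_sub_laplacian_eq_zero ae_mem_sphere measurePreserving_sphMeasure hsmooth
    (EuclideanSpace.single i 1)]
  refine integral_congr_ae (ae_mem_sphere.mono fun y hy ↦ ?_)
  simp only [fderiv_fderiv_comp_const_sub, laplacian_comp_const_sub, laplacian_G k (hne hy),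
    sum_HessG_mul k (hne hy), EuclideanSpace.inner_single_left, Real.ringHom_apply,
    one_mul, Complex.real_smul]
  ring

/-- For every `k > 0` and every `x ∈ ℝ³` with `|x| > 1`,
`∫_{S²} (k² G^k(x−y) y + Hess G^k(x−y) y) dσ(y) = 0`; i.e. the outward unit normal
`ν_y = y` lies in the kernel of the shear part of the elastic single layer potential
on the unit sphere, for every shear wavenumber `k`. -/
theorem normal_in_kernel_of_shear_single_layer
    (k : ℝ) (hk : 0 < k) (x : EuclideanSpace ℝ (Fin 3)) (hx : 1 < ‖x‖) :
    ∀ i : Fin 3,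
      ∫ y, ((k : ℂ) ^ 2 * G k (x - y) * (y i : ℂ)
          + ∑ j : Fin 3, HessG k (x - y) i j * (y j : ℂ)) ∂sphMeasure = 0 :=
  normal_in_kernel_of_shear_single_layer_general k hx.ne'
end
end

section
/- For each integer j ≥ 0 define the operator K*_j on L²(S², σ; ℂ) by (K*_j φ)(x) = −(i^j (j−1)/(4π j!)) ∫_{S²} |x−y|^{j−3} ⟨x−y, x⟩ φ(y) dσ(y) (note K*_1 = 0, and for j = 0 the kernel equals ⟨x−y, x⟩/(4π|x−y|³) = 1/(8π|x−y|) on the unit sphere). Then: (i) each K*_j is a bounded linear operator on L²(S², σ; ℂ); (ii) sup_j ‖K*_j‖ < ∞; and (iii) for every k ∈ ℂ the series ∑_{j=0}^∞ k^j K*_j converges in operator norm to the Neumann–Poincaré operator K^{k,*}, where (K^{k,*} φ)(x) = ∫_{S²} ⟨(∇G^k)(x−y), x⟩ φ(y) dσ(y). -/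
open MeasureTheory
open scoped RealInnerProductSpace

noncomputable section

/-- The gradient `∇G^k` of the fundamental solution, as a `ℂ³`-valued function. -/
noncomputable def gradG (k : ℂ) (z : EuclideanSpace ℝ (Fin 3)) (i : Fin 3) : ℂ :=
  fderiv ℝ (G k) z (EuclideanSpace.single i 1)

/-!
On the unit sphere `⟨x - y, x⟩ = |x - y|² / 2`, so expanding the gradient of the fundamental
solution in powers of `k` gives kernels of size at most `4ʲ / j! * |x - y|⁻¹`. Near each of its
points the sphere is a Lipschitz graph over the tangent plane, so it carries at most a constant
times `r²` of surface measure in a ball of radius `r`, hence the weight `|x - y|⁻¹` is integrable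
in each variable, uniformly in the other. The Schur test turns this into an operator bound
proportional to `4ʲ / j!`. Applied to the kernel of the remainder, whose Schur bound is at most a
tail of a convergent series, it also yields convergence in operator norm.
-/

open Set Filter Topology
open scoped ENNReal NNReal

/-! ### The Schur test -/

section SchurTest

variable {α β : Type*} [MeasurableSpace α] [MeasurableSpace β] {μ : Measure α} {ν : Measure β}

theorem lintegral_mul_rpow_le {w g : α → ℝ≥0∞} (hw : AEMeasurable w μ) (hg : AEMeasurable g μ)
    {p : ℝ} (hp : 1 ≤ p) :
    (∫⁻ x, w x * g x ∂μ) ^ p ≤ (∫⁻ x, w x ∂μ) ^ (p - 1) * ∫⁻ x, w x * g x ^ p ∂μ := by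
  have hp0 : 0 < p := by positivity
  have hq : 0 ≤ 1 - p⁻¹ := sub_nonneg.2 (inv_le_one_of_one_le₀ hp)
  have hsplit (x : α) : w x ^ (1 - p⁻¹) * (w x * g x ^ p) ^ p⁻¹ = w x * g x := by
    rw [ENNReal.mul_rpow_of_nonneg _ _ (by positivity), ENNReal.rpow_rpow_inv hp0.ne', ← mul_assoc,
      ← ENNReal.rpow_add_of_nonneg _ _ hq (by positivity), sub_add_cancel, ENNReal.rpow_one]
  have holder := ENNReal.lintegral_mul_norm_pow_le hw (hw.mul (hg.pow_const p)) hq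
    (inv_nonneg.2 hp0.le) (sub_add_cancel 1 p⁻¹)
  simp only [Pi.mul_apply, hsplit] at holder
  calc (∫⁻ x, w x * g x ∂μ) ^ p
      ≤ ((∫⁻ x, w x ∂μ) ^ (1 - p⁻¹) * (∫⁻ x, w x * g x ^ p ∂μ) ^ p⁻¹) ^ p :=
        ENNReal.rpow_le_rpow holder hp0.le
    _ = (∫⁻ x, w x ∂μ) ^ (p - 1) * ∫⁻ x, w x * g x ^ p ∂μ := by
        rw [ENNReal.mul_rpow_of_nonneg _ _ hp0.le, ← ENNReal.rpow_mul,
          ENNReal.rpow_inv_rpow hp0.ne', sub_mul, one_mul, inv_mul_cancel₀ hp0.ne']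

theorem lintegral_lintegral_mul_rpow_le [SFinite μ] [SFinite ν] {w : α → β → ℝ≥0∞}
    {g : β → ℝ≥0∞} {C : ℝ≥0∞} (hw : AEMeasurable (Function.uncurry w) (μ.prod ν))
    (hright : ∀ᵐ x ∂μ, ∫⁻ y, w x y ∂ν ≤ C) (hleft : ∀ᵐ y ∂ν, ∫⁻ x, w x y ∂μ ≤ C)
    (hg : AEMeasurable g ν) {p : ℝ} (hp : 1 ≤ p) :
    ∫⁻ x, (∫⁻ y, w x y * g y ∂ν) ^ p ∂μ ≤ C ^ p * ∫⁻ y, g y ^ p ∂ν := by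
  have hwg : AEMeasurable (Function.uncurry fun x y ↦ w x y * g y ^ p) (μ.prod ν) :=
    hw.mul (hg.pow_const p).comp_snd
  have hrow : ∀ᵐ x ∂μ, AEMeasurable (w x) ν :=
    hw.aestronglyMeasurable.prodMk_left.mono fun x hx ↦ hx.aemeasurable
  have hcol : ∀ᵐ y ∂ν, AEMeasurable (fun x ↦ w x y) μ :=
    hw.prod_swap.aestronglyMeasurable.prodMk_left.mono fun y hy ↦ hy.aemeasurable
  have hC : C ^ (p - 1) * C = C ^ p := by
    simpa using (ENNReal.rpow_add_of_nonneg (x := C) (p - 1) 1 (sub_nonneg.2 hp) zero_le_one).symm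
  calc ∫⁻ x, (∫⁻ y, w x y * g y ∂ν) ^ p ∂μ
      ≤ ∫⁻ x, C ^ (p - 1) * ∫⁻ y, w x y * g y ^ p ∂ν ∂μ := by
        refine lintegral_mono_ae ?_
        filter_upwards [hrow, hright] with x hx hxC
        exact (lintegral_mul_rpow_le hx hg hp).trans (by gcongr)
    _ = C ^ (p - 1) * ∫⁻ y, ∫⁻ x, w x y * g y ^ p ∂μ ∂ν := by
        rw [← lintegral_lintegral_swap hwg]
        exact lintegral_const_mul'' _ hwg.lintegral_prod_right'
    _ ≤ C ^ (p - 1) * ∫⁻ y, C * g y ^ p ∂ν := by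
        refine mul_le_mul_right (lintegral_mono_ae ?_) _
        filter_upwards [hcol, hleft] with y hy hyC
        rw [lintegral_mul_const'' _ hy]
        gcongr
    _ = C ^ p * ∫⁻ y, g y ^ p ∂ν := by
        rw [lintegral_const_mul'' _ (hg.pow_const p), ← mul_assoc, hC]

theorem eLpNorm_lintegral_mul_le [SFinite μ] [SFinite ν] {w : α → β → ℝ≥0∞}
    {g : β → ℝ≥0∞} {C : ℝ≥0∞} (hw : AEMeasurable (Function.uncurry w) (μ.prod ν))
    (hright : ∀ᵐ x ∂μ, ∫⁻ y, w x y ∂ν ≤ C) (hleft : ∀ᵐ y ∂ν, ∫⁻ x, w x y ∂μ ≤ C)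
    (hg : AEMeasurable g ν) {p : ℝ≥0∞} (hp : 1 ≤ p) :
    eLpNorm (fun x ↦ ∫⁻ y, w x y * g y ∂ν) p μ ≤ C * eLpNorm g p ν := by
  rcases eq_or_ne p ∞ with rfl | hp_top
  · simp only [eLpNorm_exponent_top]
    refine eLpNormEssSup_le_of_ae_enorm_bound ?_
    filter_upwards [hright, hw.aestronglyMeasurable.prodMk_left] with x hx hxm
    calc ∫⁻ y, w x y * g y ∂ν ≤ ∫⁻ y, w x y * eLpNormEssSup g ν ∂ν :=
          lintegral_mono_ae (ae_le_eLpNormEssSup.mono fun y hy ↦ mul_le_mul_right hy (w x y))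
      _ = (∫⁻ y, w x y ∂ν) * eLpNormEssSup g ν := lintegral_mul_const'' _ hxm.aemeasurable
      _ ≤ C * eLpNormEssSup g ν := by gcongr
  · have hp0 : p ≠ 0 := (zero_lt_one.trans_le hp).ne'
    have hp1 : 1 ≤ p.toReal := by simpa using ENNReal.toReal_mono hp_top hp
    have hp_pos : 0 < p.toReal := by positivity
    simp only [eLpNorm_eq_lintegral_rpow_enorm_toReal hp0 hp_top, enorm_eq_self, one_div]
    rw [ENNReal.rpow_inv_le_iff hp_pos, ENNReal.mul_rpow_of_nonneg _ _ hp_pos.le,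
      ENNReal.rpow_inv_rpow hp_pos.ne']
    exact lintegral_lintegral_mul_rpow_le hw hright hleft hg hp1

theorem ae_ne_top_of_eLpNorm_ne_top {f : α → ℝ≥0∞} {p : ℝ≥0∞} (hp : p ≠ 0)
    (hf : AEMeasurable f μ) (h : eLpNorm f p μ ≠ ∞) : ∀ᵐ x ∂μ, f x ≠ ∞ := by
  rcases eq_or_ne p ∞ with rfl | hp_top
  · filter_upwards [ae_le_eLpNormEssSup (f := f) (μ := μ)] with x hx
    exact (hx.trans_lt (eLpNorm_exponent_top (f := f) ▸ h.lt_top)).ne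
  · have := lintegral_rpow_enorm_lt_top_of_eLpNorm_lt_top hp hp_top h.lt_top
    filter_upwards [ae_lt_top' (hf.enorm.pow_const _) this.ne] with x hx hx'
    simp [hx', ENNReal.toReal_pos hp hp_top] at hx

variable {𝕜 : Type*} [RCLike 𝕜] {p : ℝ≥0∞}

/-- The hypotheses of the Schur test for the kernel `κ`: almost all of its rows and columns have
`L¹` norm at most `C`. -/
structure SchurBound (κ : α → β → 𝕜) (μ : Measure α) (ν : Measure β) (C : ℝ≥0) : Prop where
  aestronglyMeasurable : AEStronglyMeasurable (Function.uncurry κ) (μ.prod ν)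
  lintegral_right_le : ∀ᵐ x ∂μ, ∫⁻ y, ‖κ x y‖ₑ ∂ν ≤ C
  lintegral_left_le : ∀ᵐ y ∂ν, ∫⁻ x, ‖κ x y‖ₑ ∂μ ≤ C

/-- `T` is the integral operator with kernel `κ`. Integrability is part of the definition, as the
Bochner integral of a non-integrable function is the junk value `0`. -/
def IsIntegralOperator [Fact (1 ≤ p)] (T : Lp 𝕜 p ν →L[𝕜] Lp 𝕜 p μ) (κ : α → β → 𝕜) : Prop :=
  ∀ f : Lp 𝕜 p ν, ∀ᵐ x ∂μ, Integrable (fun y ↦ κ x y * f y) ν ∧ T f x = ∫ y, κ x y * f y ∂ν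

namespace SchurBound

variable {κ : α → β → 𝕜} {C : ℝ≥0} {f : β → 𝕜}

theorem aestronglyMeasurable_mul (h : SchurBound κ μ ν C) (hf : AEStronglyMeasurable f ν) :
    AEStronglyMeasurable (fun z : α × β ↦ κ z.1 z.2 * f z.2) (μ.prod ν) :=
  h.aestronglyMeasurable.mul hf.comp_snd

variable [SFinite μ] [SFinite ν]

theorem eLpNorm_lintegral_enorm_mul_le (h : SchurBound κ μ ν C) (hf : AEStronglyMeasurable f ν)
    (hp : 1 ≤ p) :
    eLpNorm (fun x ↦ ∫⁻ y, ‖κ x y * f y‖ₑ ∂ν) p μ ≤ C * eLpNorm f p ν := by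
  simp only [enorm_mul]
  rw [← eLpNorm_enorm f]
  exact eLpNorm_lintegral_mul_le h.aestronglyMeasurable.enorm h.lintegral_right_le
    h.lintegral_left_le hf.enorm hp

theorem ae_integrable_mul (h : SchurBound κ μ ν C) (hf : MemLp f p ν) (hp : 1 ≤ p) :
    ∀ᵐ x ∂μ, Integrable (fun y ↦ κ x y * f y) ν := by
  have hmeas := h.aestronglyMeasurable_mul hf.aestronglyMeasurable
  have hfin : eLpNorm (fun x ↦ ∫⁻ y, ‖κ x y * f y‖ₑ ∂ν) p μ ≠ ∞ :=
    ne_top_of_le_ne_top (ENNReal.mul_ne_top ENNReal.coe_ne_top hf.eLpNorm_ne_top)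
      (h.eLpNorm_lintegral_enorm_mul_le hf.aestronglyMeasurable hp)
  filter_upwards [hmeas.prodMk_left,
    ae_ne_top_of_eLpNorm_ne_top (zero_lt_one.trans_le hp).ne' hmeas.enorm.lintegral_prod_right'
      hfin] with x hx hx_top
  exact ⟨hx, hx_top.lt_top⟩

theorem eLpNorm_integral_mul_le (h : SchurBound κ μ ν C) (hf : AEStronglyMeasurable f ν)
    (hp : 1 ≤ p) : eLpNorm (fun x ↦ ∫ y, κ x y * f y ∂ν) p μ ≤ C * eLpNorm f p ν :=
  (eLpNorm_mono_enorm fun _ ↦ enorm_integral_le_lintegral_enorm _).trans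
    (h.eLpNorm_lintegral_enorm_mul_le hf hp)

theorem memLp_integral_mul (h : SchurBound κ μ ν C) (hf : MemLp f p ν) (hp : 1 ≤ p) :
    MemLp (fun x ↦ ∫ y, κ x y * f y ∂ν) p μ :=
  ⟨(h.aestronglyMeasurable_mul hf.aestronglyMeasurable).integral_prod_right',
    (h.eLpNorm_integral_mul_le hf.aestronglyMeasurable hp).trans_lt
      (ENNReal.mul_lt_top ENNReal.coe_lt_top hf.eLpNorm_lt_top)⟩

/-- The integral operator `f ↦ ∫ κ(·, y) f(y) dν(y)` from `Lᵖ(ν)` to `Lᵖ(μ)`, for a kernel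
satisfying the hypotheses of the Schur test. -/
def integralOperator (h : SchurBound κ μ ν C) (p : ℝ≥0∞) [hp : Fact (1 ≤ p)] :
    Lp 𝕜 p ν →L[𝕜] Lp 𝕜 p μ :=
  LinearMap.mkContinuous
    { toFun := fun f ↦ (h.memLp_integral_mul (Lp.memLp f) hp.out).toLp
      map_add' := fun f g ↦ by
        rw [← MemLp.toLp_add]
        refine MemLp.toLp_congr _ _ ?_
        filter_upwards [h.ae_integrable_mul (Lp.memLp f) hp.out,
          h.ae_integrable_mul (Lp.memLp g) hp.out] with x hf hg
        rw [Pi.add_apply, ← integral_add hf hg]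
        refine integral_congr_ae ?_
        filter_upwards [Lp.coeFn_add f g] with y hy
        rw [hy, Pi.add_apply, mul_add]
      map_smul' := fun c f ↦ by
        rw [RingHom.id_apply, ← MemLp.toLp_const_smul]
        refine MemLp.toLp_congr _ _ (.of_forall fun x ↦ ?_)
        rw [Pi.smul_apply, ← integral_smul]
        refine integral_congr_ae ?_
        filter_upwards [Lp.coeFn_smul c f] with y hy
        rw [hy, Pi.smul_apply, smul_eq_mul, smul_eq_mul, mul_left_comm] }
    C fun f ↦ by
      have hle := ENNReal.toReal_mono
        (ENNReal.mul_ne_top ENNReal.coe_ne_top (Lp.eLpNorm_ne_top f))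
        (h.eLpNorm_integral_mul_le (Lp.aestronglyMeasurable f) hp.out)
      change ‖(h.memLp_integral_mul (Lp.memLp f) hp.out).toLp‖ ≤ _
      rw [Lp.norm_toLp, Lp.norm_def]
      simpa using hle

theorem isIntegralOperator (h : SchurBound κ μ ν C) [hp : Fact (1 ≤ p)] :
    IsIntegralOperator (h.integralOperator p) κ := fun f ↦ by
  filter_upwards [h.ae_integrable_mul (Lp.memLp f) hp.out,
    (h.memLp_integral_mul (Lp.memLp f) hp.out).coeFn_toLp] with x hint hx
  exact ⟨hint, hx⟩

theorem norm_le [Fact (1 ≤ p)] (h : SchurBound κ μ ν C) {T : Lp 𝕜 p ν →L[𝕜] Lp 𝕜 p μ}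
    (hT : IsIntegralOperator T κ) : ‖T‖ ≤ C := by
  refine T.opNorm_le_bound C.2 fun f ↦ ?_
  have hp : 1 ≤ p := Fact.out
  have hle : eLpNorm (T f) p μ ≤ C * eLpNorm f p ν :=
    (eLpNorm_congr_ae ((hT f).mono fun x hx ↦ hx.2)).trans_le
      (h.eLpNorm_integral_mul_le (Lp.aestronglyMeasurable f) hp)
  simpa [Lp.norm_def] using ENNReal.toReal_mono
    (ENNReal.mul_ne_top ENNReal.coe_ne_top (Lp.eLpNorm_ne_top f)) hle

end SchurBound

theorem lintegral_enorm_le_tsum_of_hasSum {ι : Type*} [Countable ι] {f : ι → α → 𝕜} {g : α → 𝕜}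
    (hf : ∀ i, AEStronglyMeasurable (f i) μ) (hg : ∀ᵐ x ∂μ, HasSum (f · x) (g x)) :
    ∫⁻ x, ‖g x‖ₑ ∂μ ≤ ∑' i, ∫⁻ x, ‖f i x‖ₑ ∂μ := by
  rw [← lintegral_tsum fun i ↦ (hf i).enorm]
  exact lintegral_mono_ae <| hg.mono fun x hx ↦
    hx.enorm_le_of_bounded ENNReal.summable.hasSum fun _ ↦ le_rfl

theorem ae_ae_swap_of_ae_prod [SFinite μ] [SFinite ν] {q : α × β → Prop}
    (h : ∀ᵐ z ∂μ.prod ν, q z) : ∀ᵐ y ∂ν, ∀ᵐ x ∂μ, q (x, y) :=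
  Measure.ae_ae_of_ae_prod
    (Measure.measurePreserving_swap (μ := ν) (ν := μ) |>.quasiMeasurePreserving.ae h)

namespace SchurBound

theorem of_enorm_le_of_symm [SFinite μ] {κ : α → α → 𝕜} {w : α → α → ℝ≥0∞} {c M : ℝ≥0}
    (hκ : AEStronglyMeasurable (Function.uncurry κ) (μ.prod μ)) (hw : ∀ x y, w x y = w y x)
    (hM : ∀ᵐ x ∂μ, ∫⁻ y, w x y ∂μ ≤ M) (hκw : ∀ᵐ z ∂μ.prod μ, ‖κ z.1 z.2‖ₑ ≤ c * w z.1 z.2) :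
    SchurBound κ μ μ (c * M) where
  aestronglyMeasurable := hκ
  lintegral_right_le := by
    filter_upwards [hM, Measure.ae_ae_of_ae_prod hκw] with x hxM hx
    calc ∫⁻ y, ‖κ x y‖ₑ ∂μ ≤ ∫⁻ y, c * w x y ∂μ := lintegral_mono_ae hx
      _ ≤ (c * M : ℝ≥0) := by
        rw [lintegral_const_mul' _ _ ENNReal.coe_ne_top, ENNReal.coe_mul]
        gcongr
  lintegral_left_le := by
    filter_upwards [hM, ae_ae_swap_of_ae_prod hκw] with y hyM hy
    calc ∫⁻ x, ‖κ x y‖ₑ ∂μ ≤ ∫⁻ x, c * w y x ∂μ :=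
          lintegral_mono_ae (hy.mono fun x hx ↦ hw x y ▸ hx)
      _ ≤ (c * M : ℝ≥0) := by
        rw [lintegral_const_mul' _ _ ENNReal.coe_ne_top, ENNReal.coe_mul]
        gcongr

theorem const_mul {κ : α → β → 𝕜} {C : ℝ≥0} (h : SchurBound κ μ ν C) (c : 𝕜) :
    SchurBound (fun x y ↦ c * κ x y) μ ν (‖c‖₊ * C) where
  aestronglyMeasurable := h.aestronglyMeasurable.const_mul c
  lintegral_right_le := by
    filter_upwards [h.lintegral_right_le] with x hx
    simp only [enorm_mul, ENNReal.coe_mul]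
    rw [lintegral_const_mul' _ _ enorm_ne_top]
    exact mul_le_mul_right hx _
  lintegral_left_le := by
    filter_upwards [h.lintegral_left_le] with y hy
    simp only [enorm_mul, ENNReal.coe_mul]
    rw [lintegral_const_mul' _ _ enorm_ne_top]
    exact mul_le_mul_right hy _

variable [SFinite μ] [SFinite ν] {ι : Type*} [Countable ι] {κ : ι → α → β → 𝕜}
  {κ' : α → β → 𝕜} {C : ι → ℝ≥0}

theorem of_hasSum (h : ∀ i, SchurBound (κ i) μ ν (C i)) (hC : Summable C)
    (hκ' : ∀ᵐ z ∂μ.prod ν, HasSum (κ · z.1 z.2) (κ' z.1 z.2)) :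
    SchurBound κ' μ ν (∑' i, C i) where
  aestronglyMeasurable :=
    aestronglyMeasurable_of_tendsto_ae atTop
      (fun s ↦ s.aestronglyMeasurable_fun_sum fun i _ ↦ (h i).aestronglyMeasurable) hκ'
  lintegral_right_le := by
    filter_upwards [Measure.ae_ae_of_ae_prod hκ',
      ae_all_iff.2 fun i ↦ (h i).aestronglyMeasurable.prodMk_left,
      ae_all_iff.2 fun i ↦ (h i).lintegral_right_le] with x hsum hmeas hle
    rw [ENNReal.coe_tsum hC]
    exact (lintegral_enorm_le_tsum_of_hasSum hmeas hsum).trans (ENNReal.tsum_le_tsum hle)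
  lintegral_left_le := by
    filter_upwards [ae_ae_swap_of_ae_prod hκ',
      ae_all_iff.2 fun i ↦ (h i).aestronglyMeasurable.prod_swap.prodMk_left,
      ae_all_iff.2 fun i ↦ (h i).lintegral_left_le] with y hsum hmeas hle
    rw [ENNReal.coe_tsum hC]
    exact (lintegral_enorm_le_tsum_of_hasSum hmeas hsum).trans (ENNReal.tsum_le_tsum hle)

end SchurBound

namespace IsIntegralOperator

variable [Fact (1 ≤ p)]

theorem const_smul {T : Lp 𝕜 p ν →L[𝕜] Lp 𝕜 p μ} {κ : α → β → 𝕜} (hT : IsIntegralOperator T κ)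
    (c : 𝕜) : IsIntegralOperator (c • T) fun x y ↦ c * κ x y := fun f ↦ by
  filter_upwards [hT f, Lp.coeFn_smul c (T f)] with x ⟨hint, hTx⟩ hx
  simp only [mul_assoc]
  refine ⟨hint.const_mul c, ?_⟩
  rw [smul_apply, hx, Pi.smul_apply, hTx, smul_eq_mul, integral_const_mul]

theorem sub {S T : Lp 𝕜 p ν →L[𝕜] Lp 𝕜 p μ} {κ κ' : α → β → 𝕜} (hS : IsIntegralOperator S κ)
    (hT : IsIntegralOperator T κ') : IsIntegralOperator (S - T) fun x y ↦ κ x y - κ' x y :=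
  fun f ↦ by
    filter_upwards [hS f, hT f, Lp.coeFn_sub (S f) (T f)] with x ⟨hSint, hSx⟩ ⟨hTint, hTx⟩ hx
    simp only [sub_mul]
    refine ⟨hSint.sub hTint, ?_⟩
    rw [sub_apply, hx, Pi.sub_apply, hSx, hTx, integral_sub hSint hTint]

variable {ι : Type*} {κ : ι → α → β → 𝕜} {T : ι → Lp 𝕜 p ν →L[𝕜] Lp 𝕜 p μ}

theorem sum (hT : ∀ i, IsIntegralOperator (T i) (κ i)) (s : Finset ι) :
    IsIntegralOperator (∑ i ∈ s, T i) fun x y ↦ ∑ i ∈ s, κ i x y := fun f ↦ by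
  filter_upwards [(ae_ball_iff s.countable_toSet).2 fun i _ ↦ hT i f,
    Lp.coeFn_finsetSum s fun i ↦ T i f] with x hTx hx
  have hint : ∀ i ∈ s, Integrable (fun y ↦ κ i x y * f y) ν := fun i hi ↦ (hTx i hi).1
  simp only [Finset.sum_mul]
  refine ⟨integrable_finsetSum s hint, ?_⟩
  rw [sum_apply, hx, Finset.sum_apply, integral_finsetSum s hint]
  exact Finset.sum_congr rfl fun i hi ↦ (hTx i hi).2

theorem hasSum [Countable ι] [SFinite μ] [SFinite ν] {C : ι → ℝ≥0} {κ' : α → β → 𝕜}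
    {S : Lp 𝕜 p ν →L[𝕜] Lp 𝕜 p μ} (hT : ∀ i, IsIntegralOperator (T i) (κ i))
    (hS : IsIntegralOperator S κ') (h : ∀ i, SchurBound (κ i) μ ν (C i)) (hC : Summable C)
    (hκ' : ∀ᵐ z ∂μ.prod ν, HasSum (κ · z.1 z.2) (κ' z.1 z.2)) : HasSum T S := by
  have htail (s : Finset ι) : ‖S - ∑ i ∈ s, T i‖ ≤ (∑' i : {i // i ∉ s}, C i : ℝ≥0) := by
    have hrest : ∀ᵐ z ∂μ.prod ν, HasSum (fun i : {i // i ∉ s} ↦ κ i z.1 z.2)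
        (κ' z.1 z.2 - ∑ i ∈ s, κ i z.1 z.2) := hκ'.mono fun z hz ↦
      (s.hasSum_compl_iff (f := (κ · z.1 z.2))).2 (by rwa [sub_add_cancel])
    have hbound : SchurBound (fun x y ↦ κ' x y - ∑ i ∈ s, κ i x y) μ ν
        (∑' i : {i // i ∉ s}, C i) :=
      .of_hasSum (fun i : {i // i ∉ s} ↦ h i)
        (NNReal.summable_comp_injective hC Subtype.val_injective) hrest
    exact hbound.norm_le (hS.sub (sum hT s))
  refine tendsto_iff_norm_sub_tendsto_zero.2 <| squeeze_zero (fun s ↦ norm_nonneg _) (fun s ↦ ?_)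
    (NNReal.tendsto_coe.2 (NNReal.tendsto_tsum_compl_atTop_zero C))
  rw [norm_sub_rev]
  exact htail s

end IsIntegralOperator

end SchurTest

/-! ### Surface measure of small caps -/

theorem setOf_lt_dist_rpow_neg_subset_closedBall {X : Type*} [PseudoMetricSpace X] (x : X)
    {a t : ℝ} (ha : 0 < a) (ht : 0 < t) :
    {y | t < dist x y ^ (-a)} ⊆ Metric.closedBall x (t ^ (-a⁻¹)) := fun y hy ↦ by
  rw [Metric.mem_closedBall, dist_comm]
  rcases (dist_nonneg (x := x) (y := y)).eq_or_lt' with h0 | hpos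
  · rw [h0]
    positivity
  · have := Real.rpow_le_rpow_of_nonpos (z := -a⁻¹) ht (le_of_lt hy) (by simpa using ha.le)
    rwa [← Real.rpow_mul hpos.le, neg_mul_neg, mul_inv_cancel₀ ha.ne', Real.rpow_one] at this

theorem lintegral_dist_rpow_neg_le {X : Type*} [PseudoMetricSpace X] [MeasurableSpace X]
    [OpensMeasurableSpace X] {μ : Measure X} {x : X} {C : ℝ≥0∞} {a s : ℝ} (ha : 0 < a)
    (has : a < s) (hμ : ∀ r ∈ Ioc (0 : ℝ) 1, μ (Metric.closedBall x r) ≤ C * .ofReal (r ^ s)) :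
    ∫⁻ y, .ofReal (dist x y ^ (-a)) ∂μ ≤ μ univ + C * .ofReal (a / (s - a)) := by
  have hexp : -(s / a) < -1 := neg_lt_neg ((one_lt_div ha).2 has)
  have hsublevel {t : ℝ} (ht : 1 < t) :
      μ {y | t < dist x y ^ (-a)} ≤ C * .ofReal (t ^ (-(s / a))) := by
    have ht0 : 0 < t := by positivity
    calc μ {y | t < dist x y ^ (-a)} ≤ μ (Metric.closedBall x (t ^ (-a⁻¹))) :=
          measure_mono (setOf_lt_dist_rpow_neg_subset_closedBall x ha ht0)
      _ ≤ C * .ofReal ((t ^ (-a⁻¹)) ^ s) := hμ _ ⟨by positivity,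
          Real.rpow_le_one_of_one_le_of_nonpos ht.le (by simpa using ha.le)⟩
      _ = C * .ofReal (t ^ (-(s / a))) := by
        rw [← Real.rpow_mul ht0.le, neg_mul, inv_mul_eq_div]
  rw [lintegral_eq_lintegral_meas_lt μ (.of_forall fun y ↦ by positivity) (by fun_prop),
    ← Ioc_union_Ioi_eq_Ioi zero_le_one]
  refine (lintegral_union_le _ _ _).trans (add_le_add ?_ ?_)
  · calc ∫⁻ t in Ioc 0 1, μ {y | t < dist x y ^ (-a)} ≤ ∫⁻ _ in Ioc (0 : ℝ) 1, μ univ :=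
          lintegral_mono fun t ↦ measure_mono (subset_univ _)
      _ = μ univ := by simp
  · calc ∫⁻ t in Ioi 1, μ {y | t < dist x y ^ (-a)}
        ≤ ∫⁻ t in Ioi (1 : ℝ), C * .ofReal (t ^ (-(s / a))) :=
          setLIntegral_mono' measurableSet_Ioi fun t ht ↦ hsublevel ht
      _ = C * .ofReal (∫ t in Ioi (1 : ℝ), t ^ (-(s / a))) := by
        rw [lintegral_const_mul _ (by fun_prop), ofReal_integral_eq_lintegral_ofReal
          (integrableOn_Ioi_rpow_of_lt hexp one_pos)]
        filter_upwards [ae_restrict_mem measurableSet_Ioi] with t ht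
        exact Real.rpow_nonneg (zero_le_one.trans (le_of_lt ht)) _
      _ = C * .ofReal (a / (s - a)) := by
        rw [integral_Ioi_rpow_of_lt hexp one_pos, Real.one_rpow]
        congr 2
        field_simp
        grind

theorem hausdorffMeasure_le_of_dist_le_mul {X Y : Type*} [MetricSpace X] [MeasurableSpace X]
    [BorelSpace X] [MetricSpace Y] [MeasurableSpace Y] [BorelSpace Y] {f : X → Y} {s : Set X}
    {K : ℝ≥0} {d : ℝ} (hd : 0 ≤ d) (hf : ∀ y ∈ s, ∀ z ∈ s, dist y z ≤ K * dist (f y) (f z)) :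
    μH[d] s ≤ (K : ℝ≥0∞) ^ d * μH[d] (f '' s) := by
  have hanti : AntilipschitzWith K (s.domRestrict f) :=
    .of_le_mul_dist fun y z ↦ hf y y.2 z z.2
  have hs : μH[d] s = μH[d] (univ : Set s) := by
    rw [← (isometry_subtype_coe (s := s)).hausdorffMeasure_image (.inl hd), image_univ,
      Subtype.range_coe]
  rw [hs, ← range_domRestrict, ← image_univ]
  exact hanti.le_hausdorffMeasure_image hd univ

section Sphere

variable {E : Type*} [NormedAddCommGroup E] [InnerProductSpace ℝ E]

theorem hasFDerivAt_norm {x : E} (hx : x ≠ 0) : HasFDerivAt (‖·‖) (‖x‖⁻¹ • innerSL ℝ x) x := by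
  have hsqrt := (hasStrictFDerivAt_norm_sq x).hasFDerivAt.sqrt (by simpa using hx)
  simp only [Real.sqrt_sq (norm_nonneg _)] at hsqrt
  convert hsqrt using 1
  ext v
  simp only [smul_apply, coe_innerSL_apply, smul_eq_mul, one_div, mul_inv_rev, nsmul_eq_mul,
    Nat.cast_ofNat]
  field

theorem real_inner_sub_left_eq_norm_sub_sq_div_two {x y : E} (h : ‖x‖ = ‖y‖) :
    ⟪x - y, x⟫ = ‖x - y‖ ^ 2 / 2 := by
  rw [norm_sub_sq_real, inner_sub_left, real_inner_self_eq_norm_sq, real_inner_comm, h]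
  ring

theorem half_le_real_inner_of_norm_sub_le_one {e y : E} (he : ‖e‖ = 1) (hy : ‖y‖ = 1)
    (h : ‖e - y‖ ≤ 1) : 1 / 2 ≤ ⟪e, y⟫ := by
  have hsq : ‖e - y‖ ^ 2 ≤ 1 := pow_le_one₀ (norm_nonneg _) h
  rw [norm_sub_sq_real, he, hy] at hsq
  linarith

theorem eq_inner_smul_add_starProjection_orthogonal {e : E} (he : ‖e‖ = 1) (v : E) :
    v = ⟪e, v⟫ • e + (ℝ ∙ e)ᗮ.starProjection v := by
  rw [← Submodule.starProjection_unit_singleton ℝ he,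
    Submodule.starProjection_add_starProjection_orthogonal]

theorem real_inner_eq_mul_add_inner_starProjection_orthogonal {e : E} (he : ‖e‖ = 1) (v w : E) :
    ⟪v, w⟫ = ⟪e, v⟫ * ⟪e, w⟫ + ⟪(ℝ ∙ e)ᗮ.starProjection v, (ℝ ∙ e)ᗮ.starProjection w⟫ := by
  have horth (u : E) : ⟪e, (ℝ ∙ e)ᗮ.starProjection u⟫ = 0 :=
    Submodule.mem_orthogonal_singleton_iff_inner_right.1 (Submodule.starProjection_apply_mem _ u)
  conv_lhs =>
    rw [eq_inner_smul_add_starProjection_orthogonal he v,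
      eq_inner_smul_add_starProjection_orthogonal he w]
  simp only [inner_add_left, inner_add_right, real_inner_smul_left, real_inner_smul_right,
    real_inner_self_eq_norm_sq, he, horth, real_inner_comm e]
  ring

theorem norm_sub_le_mul_norm_starProjection_orthogonal_sub {e y z : E} {c : ℝ} (he : ‖e‖ = 1)
    (hy : ‖y‖ = 1) (hz : ‖z‖ = 1) (hc : 0 < c) (hey : c ≤ ⟪e, y⟫) (hez : c ≤ ⟪e, z⟫) :
    ‖y - z‖ ≤ (1 + c⁻¹) * ‖(ℝ ∙ e)ᗮ.starProjection (y - z)‖ := by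
  set P := (ℝ ∙ e)ᗮ.starProjection
  -- As `y - z ⟂ y + z`, the axial part of `y - z` is controlled by its orthogonal part.
  have hortho : ⟪e, y - z⟫ * ⟪e, y + z⟫ + ⟪P (y - z), P (y + z)⟫ = 0 := by
    rw [← real_inner_eq_mul_add_inner_starProjection_orthogonal he, real_inner_comm,
      real_inner_add_sub_eq_zero_iff, hy, hz]
  have hnorm : ‖P (y + z)‖ ≤ 2 := by
    calc ‖P (y + z)‖ ≤ ‖y + z‖ := Submodule.norm_starProjection_apply_le _ _
      _ ≤ 2 := (norm_add_le y z).trans_eq (by rw [hy, hz]; norm_num)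
  have haxial : c * |⟪e, y - z⟫| ≤ ‖P (y - z)‖ := by
    have hsum : 2 * c ≤ |⟪e, y + z⟫| := by
      rw [inner_add_right]
      exact (by linarith : 2 * c ≤ ⟪e, y⟫ + ⟪e, z⟫).trans (le_abs_self _)
    have hprod : |⟪e, y - z⟫| * |⟪e, y + z⟫| ≤ ‖P (y - z)‖ * 2 := by
      calc |⟪e, y - z⟫| * |⟪e, y + z⟫| = |⟪P (y - z), P (y + z)⟫| := by
            rw [← abs_mul, ← abs_neg]
            congr 1
            linarith
        _ ≤ ‖P (y - z)‖ * ‖P (y + z)‖ := abs_real_inner_le_norm _ _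
        _ ≤ ‖P (y - z)‖ * 2 := by gcongr
    nlinarith [abs_nonneg ⟪e, y - z⟫]
  calc ‖y - z‖ ≤ ‖⟪e, y - z⟫ • e‖ + ‖P (y - z)‖ := by
        conv_lhs => rw [eq_inner_smul_add_starProjection_orthogonal he (y - z)]
        exact norm_add_le _ _
    _ = |⟪e, y - z⟫| + ‖P (y - z)‖ := by rw [norm_smul, he, mul_one, Real.norm_eq_abs]
    _ ≤ c⁻¹ * ‖P (y - z)‖ + ‖P (y - z)‖ := by
        gcongr
        rwa [← div_eq_inv_mul, le_div_iff₀' hc]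
    _ = (1 + c⁻¹) * ‖P (y - z)‖ := by ring

variable {n : ℕ} [Fact (Module.finrank ℝ E = n + 1)] [MeasurableSpace E] [BorelSpace E]

theorem hausdorffMeasure_sphere_inter_closedBall_le {e : E} (he : ‖e‖ = 1) {r : ℝ}
    (hr : r ∈ Icc (0 : ℝ) 1) :
    μH[n] (Metric.sphere (0 : E) 1 ∩ Metric.closedBall e r) ≤
      3 ^ n * μH[n] (Metric.ball (0 : EuclideanSpace ℝ (Fin n)) 1) * .ofReal (r ^ n) := by
  set S := Metric.sphere (0 : E) 1 ∩ Metric.closedBall e r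
  have he0 : e ≠ 0 := by rintro rfl; simp at he
  let coords := (OrthonormalBasis.fromOrthogonalSpanSingleton (𝕜 := ℝ) n he0).repr
  let π : E → EuclideanSpace ℝ (Fin n) := fun y ↦ coords ((ℝ ∙ e)ᗮ.orthogonalProjectionOnto y)
  have hdist (y z : E) : dist (π y) (π z) = ‖(ℝ ∙ e)ᗮ.starProjection (y - z)‖ := by
    rw [dist_eq_norm, ← map_sub, ← map_sub, LinearIsometryEquiv.norm_map]
    rfl
  have hcap {y : E} (hy : y ∈ S) : ‖y‖ = 1 ∧ 1 / 2 ≤ ⟪e, y⟫ := by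
    have hy1 : ‖y‖ = 1 := by simpa using hy.1
    refine ⟨hy1, half_le_real_inner_of_norm_sub_le_one he hy1 ?_⟩
    rw [← dist_eq_norm, dist_comm]
    exact hy.2.trans hr.2
  have hanti : ∀ y ∈ S, ∀ z ∈ S, dist y z ≤ (3 : ℝ≥0) * dist (π y) (π z) := fun y hy z hz ↦ by
    have := norm_sub_le_mul_norm_starProjection_orthogonal_sub he (hcap hy).1 (hcap hz).1
      one_half_pos (hcap hy).2 (hcap hz).2
    rw [← hdist, ← dist_eq_norm] at this
    norm_num at this ⊢
    exact this
  have himage : π '' S ⊆ Metric.closedBall (π e) r := by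
    rintro _ ⟨y, hy, rfl⟩
    rw [Metric.mem_closedBall, hdist]
    exact (Submodule.norm_starProjection_apply_le _ _).trans (dist_eq_norm y e ▸ hy.2)
  calc μH[n] S ≤ 3 ^ n * μH[n] (π '' S) := by
        simpa using hausdorffMeasure_le_of_dist_le_mul n.cast_nonneg hanti
    _ ≤ 3 ^ n * μH[n] (Metric.closedBall (π e) r) := by gcongr
    _ = 3 ^ n * μH[n] (Metric.ball (0 : EuclideanSpace ℝ (Fin n)) 1) * .ofReal (r ^ n) := by
        rw [Measure.addHaar_closedBall _ _ hr.1, finrank_euclideanSpace_fin, mul_assoc,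
          mul_comm (ENNReal.ofReal _)]

variable (E n) in
theorem hausdorffMeasure_sphere_lt_top_s12 : μH[n] (Metric.sphere (0 : E) 1) < ∞ := by
  have : FiniteDimensional ℝ E := .of_fact_finrank_eq_succ n
  refine (isCompact_sphere 0 1).measure_lt_top_of_nhdsWithin fun e he ↦
    ⟨_, inter_mem_nhdsWithin _ (Metric.closedBall_mem_nhds e one_pos),
      (hausdorffMeasure_sphere_inter_closedBall_le (by simpa using he)
        (right_mem_Icc.2 zero_le_one)).trans_lt ?_⟩
  have := measure_ball_lt_top (μ := μH[n]) (x := (0 : EuclideanSpace ℝ (Fin n))) (r := 1)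
  finiteness

variable (E n) in
theorem exists_lintegral_sphere_dist_rpow_neg_le {a : ℝ} (ha : 0 < a) (han : a < n) :
    ∃ M : ℝ≥0, ∀ e ∈ Metric.sphere (0 : E) 1,
      ∫⁻ y in Metric.sphere (0 : E) 1, .ofReal (dist e y ^ (-a)) ∂μH[n] ≤ M := by
  have := measure_ball_lt_top (μ := μH[n]) (x := (0 : EuclideanSpace ℝ (Fin n))) (r := 1)
  set C := 3 ^ n * μH[n] (Metric.ball (0 : EuclideanSpace ℝ (Fin n)) 1)
  have hsphere := hausdorffMeasure_sphere_lt_top_s12 E n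
  refine ⟨(μH[n] (Metric.sphere (0 : E) 1) + C * .ofReal (a / (n - a))).toNNReal, fun e he ↦ ?_⟩
  rw [ENNReal.coe_toNNReal (by finiteness), ← Measure.restrict_apply_univ (Metric.sphere (0 : E) 1)]
  refine lintegral_dist_rpow_neg_le ha han fun r hr ↦ ?_
  rw [Measure.restrict_apply Metric.isClosed_closedBall.measurableSet, inter_comm,
    Real.rpow_natCast]
  exact hausdorffMeasure_sphere_inter_closedBall_le (by simpa using he) (Ioc_subset_Icc_self hr)

end Sphere

theorem ae_prod_fst_ne_snd {X : Type*} [MeasurableSpace X] [MeasurableEq X] (μ ν : Measure X)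
    [SFinite ν] [NullSingletonClass ν] : ∀ᵐ z ∂μ.prod ν, z.1 ≠ z.2 := by
  refine (Measure.ae_prod_iff_ae_ae measurableSet_diagonal.compl).2 (.of_forall fun x ↦ ?_)
  exact (Measure.ae_ne ν x).mono fun _ ↦ Ne.symm

instance (n : ℕ) : Fact (Module.finrank ℝ (EuclideanSpace ℝ (Fin (n + 1))) = n + 1) :=
  ⟨finrank_euclideanSpace_fin⟩

instance inst_s12 : IsFiniteMeasure sphMeasure where
  measure_univ_lt_top := by
    simpa [sphMeasure] using hausdorffMeasure_sphere_lt_top_s12 (EuclideanSpace ℝ (Fin 3)) 2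

instance : NullSingletonClass sphMeasure :=
  have := Measure.nullSingletonClass_hausdorff (EuclideanSpace ℝ (Fin 3)) two_pos
  inferInstanceAs (NullSingletonClass (Measure.restrict _ _))

theorem ae_norm_eq_one_sphMeasure : ∀ᵐ x ∂sphMeasure, ‖x‖ = 1 := by
  filter_upwards [ae_restrict_mem Metric.isClosed_sphere.measurableSet] with x hx
  simpa using hx

theorem ae_prod_sphMeasure :
    ∀ᵐ z ∂sphMeasure.prod sphMeasure, ‖z.1‖ = 1 ∧ ‖z.2‖ = 1 ∧ z.1 ≠ z.2 := by
  filter_upwards [Measure.quasiMeasurePreserving_fst.ae ae_norm_eq_one_sphMeasure,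
    Measure.quasiMeasurePreserving_snd.ae ae_norm_eq_one_sphMeasure,
    ae_prod_fst_ne_snd sphMeasure sphMeasure] with z h₁ h₂ hne
  exact ⟨h₁, h₂, hne⟩

theorem exists_lintegral_norm_sub_inv_sphMeasure_le :
    ∃ M : ℝ≥0, ∀ᵐ x ∂sphMeasure, ∫⁻ y, ‖‖x - y‖⁻¹‖ₑ ∂sphMeasure ≤ M := by
  obtain ⟨M, hM⟩ := exists_lintegral_sphere_dist_rpow_neg_le (EuclideanSpace ℝ (Fin 3)) 2
    one_pos Nat.one_lt_ofNat
  refine ⟨M, ?_⟩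
  filter_upwards [ae_norm_eq_one_sphMeasure] with x hx
  have henorm (y : EuclideanSpace ℝ (Fin 3)) : ‖‖x - y‖⁻¹‖ₑ = .ofReal (dist x y ^ (-1 : ℝ)) := by
    rw [Real.enorm_of_nonneg (by positivity), dist_eq_norm, Real.rpow_neg_one]
  simp only [henorm]
  simpa [sphMeasure] using hM x (by simpa using hx)

/-! ### The Neumann–Poincaré kernel and its expansion -/

theorem hasDerivAt_neg_cexp_div (k : ℂ) {r : ℝ} (hr : r ≠ 0) :
    HasDerivAt (fun r : ℝ ↦ -Complex.exp (Complex.I * k * r) / (4 * Real.pi * r : ℝ))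
      ((1 - Complex.I * k * r) * Complex.exp (Complex.I * k * r) / (4 * Real.pi * r ^ 2)) r := by
  have hexp : HasDerivAt (fun r : ℝ ↦ Complex.exp (Complex.I * k * r))
      (Complex.exp (Complex.I * k * r) * (Complex.I * k)) r := by
    simpa using (Complex.ofRealCLM.hasDerivAt.const_mul (Complex.I * k)).cexp
  have hden : HasDerivAt (fun r : ℝ ↦ ((4 * Real.pi * r : ℝ) : ℂ)) (4 * Real.pi) r := by
    simpa using ((hasDerivAt_id r).const_mul (4 * Real.pi)).ofReal_comp
  refine (hexp.neg.div hden (by simp [hr, Real.pi_ne_zero])).congr_deriv ?_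
  rw [Pi.neg_apply]
  push_cast
  field

theorem fderiv_G_apply (k : ℂ) {z : EuclideanSpace ℝ (Fin 3)} (hz : z ≠ 0)
    (v : EuclideanSpace ℝ (Fin 3)) :
    fderiv ℝ (G k) z v = (1 - Complex.I * k * ‖z‖) * Complex.exp (Complex.I * k * ‖z‖) /
      (4 * Real.pi * ‖z‖ ^ 3) * (⟪z, v⟫ : ℝ) := by
  have hG : HasFDerivAt (G k) _ z :=
    (hasDerivAt_neg_cexp_div k (norm_ne_zero_iff.2 hz)).hasFDerivAt.comp z (hasFDerivAt_norm hz)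
  rw [hG.fderiv]
  simp only [ContinuousLinearMap.comp_smulₛₗ, map_inv₀, Real.ringHom_apply, smul_apply,
    ContinuousLinearMap.comp_apply, coe_innerSL_apply, ContinuousLinearMap.toSpanSingleton_apply,
    Complex.real_smul, Complex.ofReal_inv]
  field

theorem sum_gradG_mul (k : ℂ) (z v : EuclideanSpace ℝ (Fin 3)) :
    ∑ i, gradG k z i * (v i : ℂ) = fderiv ℝ (G k) z v := by
  conv_rhs => rw [← (EuclideanSpace.basisFun (Fin 3) ℝ).sum_repr v]
  simp [gradG, mul_comm]

theorem hasSum_one_sub_mul_pow_div_factorial (w : ℂ) :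
    HasSum (fun j : ℕ ↦ (1 - j) * w ^ j / j.factorial) ((1 - w) * Complex.exp w) := by
  have hexp : HasSum (fun j : ℕ ↦ w ^ j / j.factorial) (Complex.exp w) := by
    simpa [Complex.exp_eq_exp_ℂ] using NormedSpace.expSeries_div_hasSum_exp w
  have hderiv : HasSum (fun j : ℕ ↦ j * w ^ j / j.factorial) (w * Complex.exp w) := by
    rw [← hasSum_nat_add_iff' 1]
    simp only [Finset.sum_range_one, Nat.cast_zero, zero_mul, zero_div, sub_zero]
    refine (hexp.mul_left w).congr_fun fun j ↦ ?_
    rw [Nat.factorial_succ]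
    push_cast
    field
  simpa only [sub_mul, one_mul, sub_div] using hexp.sub hderiv

/-- The kernel `−(iʲ (j − 1) / (4π j!)) |x − y|^(j − 3) ⟨x − y, x⟩` of the operator `K*_j`, the
coefficient of `kʲ` in the expansion of the Neumann–Poincaré kernel. -/
def coeffKernel (j : ℕ) (x y : EuclideanSpace ℝ (Fin 3)) : ℂ :=
  -(Complex.I ^ j * ((j : ℂ) - 1) / (4 * Real.pi * (Nat.factorial j : ℂ))) *
    (((‖x - y‖ ^ ((j : ℤ) - 3) : ℝ) : ℂ) * ((⟪x - y, x⟫ : ℝ) : ℂ))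

/-- The kernel `⟨(∇Gᵏ)(x − y), x⟩` of the Neumann–Poincaré operator `K^{k,*}` of the unit sphere,
whose outward normal at `x` is `x`. -/
def neumannPoincareKernel (k : ℂ) (x y : EuclideanSpace ℝ (Fin 3)) : ℂ :=
  ∑ i : Fin 3, gradG k (x - y) i * (x i : ℂ)

theorem hasSum_pow_mul_coeffKernel (k : ℂ) {x y : EuclideanSpace ℝ (Fin 3)} (hxy : x ≠ y) :
    HasSum (fun j ↦ k ^ j * coeffKernel j x y) (neumannPoincareKernel k x y) := by
  have hr : (‖x - y‖ : ℂ) ≠ 0 := by simpa [sub_eq_zero] using hxy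
  rw [neumannPoincareKernel, sum_gradG_mul, fderiv_G_apply k (sub_ne_zero.2 hxy)]
  refine (((hasSum_one_sub_mul_pow_div_factorial (Complex.I * k * ‖x - y‖)).div_const
    (4 * Real.pi * ‖x - y‖ ^ 3)).mul_right ((⟪x - y, x⟫ : ℝ) : ℂ)).congr_fun fun j ↦ ?_
  rw [coeffKernel, Complex.ofReal_zpow, zpow_sub₀ hr, zpow_natCast, mul_pow, mul_pow]
  field

theorem measurable_coeffKernel (j : ℕ) : Measurable (Function.uncurry (coeffKernel j)) := by
  unfold Function.uncurry coeffKernel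
  fun_prop

theorem norm_coeffKernel_le (j : ℕ) {x y : EuclideanSpace ℝ (Fin 3)} (hx : ‖x‖ = 1)
    (hy : ‖y‖ = 1) : ‖coeffKernel j x y‖ ≤ 4 ^ j / j.factorial * ‖x - y‖⁻¹ := by
  rcases eq_or_ne x y with rfl | hxy
  · simp [coeffKernel]
  have hr : 0 < ‖x - y‖ := norm_pos_iff.2 (sub_ne_zero.2 hxy)
  have hr2 : ‖x - y‖ ≤ 2 := (norm_sub_le x y).trans_eq (by rw [hx, hy]; norm_num)
  have hj : ‖(j : ℂ) - 1‖ ≤ 2 ^ j := by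
    have hlt : (j : ℝ) < 2 ^ j := mod_cast j.lt_two_pow_self
    have hpos : (1 : ℝ) ≤ 2 ^ j := one_le_pow₀ one_le_two
    rw [← Complex.ofReal_natCast, ← Complex.ofReal_one, ← Complex.ofReal_sub, Complex.norm_real,
      Real.norm_eq_abs, abs_le]
    constructor <;> linarith [j.cast_nonneg (α := ℝ)]
  have hpow : ‖x - y‖ ^ ((j : ℤ) - 3) * ⟪x - y, x⟫ = ‖x - y‖ ^ j * ‖x - y‖⁻¹ / 2 := by
    rw [real_inner_sub_left_eq_norm_sub_sq_div_two (hx.trans hy.symm), zpow_sub₀ hr.ne',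
      zpow_natCast]
    norm_cast
    field
  calc ‖coeffKernel j x y‖
      = ‖(j : ℂ) - 1‖ / (4 * Real.pi * j.factorial) * (‖x - y‖ ^ j * ‖x - y‖⁻¹ / 2) := by
        rw [coeffKernel, ← Complex.ofReal_mul, hpow]
        simp [abs_of_pos Real.pi_pos]
    _ ≤ 2 ^ j / (1 * j.factorial) * (2 ^ j * ‖x - y‖⁻¹ / 1) := by
        gcongr
        · linarith [Real.pi_gt_three]
        · norm_num
    _ = 4 ^ j / j.factorial * ‖x - y‖⁻¹ := by
        rw [show (4 : ℝ) = 2 * 2 by norm_num, mul_pow]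
        ring

theorem exists_schurBound_coeffKernel :
    ∃ M : ℝ≥0, ∀ j, SchurBound (coeffKernel j) sphMeasure sphMeasure
      (4 ^ j / j.factorial * M) := by
  obtain ⟨M, hM⟩ := exists_lintegral_norm_sub_inv_sphMeasure_le
  refine ⟨M, fun j ↦ .of_enorm_le_of_symm (measurable_coeffKernel j).aestronglyMeasurable
    (fun x y ↦ by rw [norm_sub_rev]) hM ?_⟩
  filter_upwards [ae_prod_sphMeasure] with z ⟨h₁, h₂, _⟩
  have hnnnorm : ‖coeffKernel j z.1 z.2‖₊ ≤ 4 ^ j / j.factorial * ‖‖z.1 - z.2‖⁻¹‖₊ := by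
    rw [← NNReal.coe_le_coe]
    simpa using norm_coeffKernel_le j h₁ h₂
  exact (ENNReal.coe_le_coe.2 hnnnorm).trans_eq (ENNReal.coe_mul _ _)

theorem summable_nnnorm_pow_mul_pow_div_factorial (k : ℂ) (M : ℝ≥0) :
    Summable fun j : ℕ ↦ ‖k ^ j‖₊ * (4 ^ j / j.factorial * M) := by
  rw [← NNReal.summable_coe]
  refine ((Real.summable_pow_div_factorial (4 * ‖k‖)).mul_right (M : ℝ)).congr fun j ↦ ?_
  push_cast
  rw [norm_pow, mul_pow]
  ring

theorem neumann_poincare_operator_norm_expansion_general (p : ℝ≥0∞) [Fact (1 ≤ p)] :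
    ∃ K : ℕ → (Lp ℂ p sphMeasure →L[ℂ] Lp ℂ p sphMeasure),
      (∀ j, IsIntegralOperator (K j) (coeffKernel j)) ∧
      (∃ C : ℝ, ∀ j, ‖K j‖ ≤ C) ∧
      ∀ k : ℂ, ∃ Kstar : Lp ℂ p sphMeasure →L[ℂ] Lp ℂ p sphMeasure,
        IsIntegralOperator Kstar (neumannPoincareKernel k) ∧
        HasSum (fun j ↦ k ^ j • K j) Kstar := by
  obtain ⟨M, hM⟩ := exists_schurBound_coeffKernel
  have hK (j : ℕ) : IsIntegralOperator ((hM j).integralOperator p) (coeffKernel j) :=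
    (hM j).isIntegralOperator
  refine ⟨fun j ↦ (hM j).integralOperator p, hK, ⟨Real.exp 4 * M, fun j ↦ ?_⟩, fun k ↦ ?_⟩
  · refine ((hM j).norm_le (hK j)).trans ?_
    push_cast
    gcongr
    exact Real.pow_div_factorial_le_exp 4 (by norm_num) j
  · have hbound (j : ℕ) := (hM j).const_mul (k ^ j)
    have hsummable := summable_nnnorm_pow_mul_pow_div_factorial k M
    have hsum : ∀ᵐ z ∂sphMeasure.prod sphMeasure,
        HasSum (fun j ↦ k ^ j * coeffKernel j z.1 z.2) (neumannPoincareKernel k z.1 z.2) :=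
      ae_prod_sphMeasure.mono fun z hz ↦ hasSum_pow_mul_coeffKernel k hz.2.2
    have hKstar := SchurBound.of_hasSum hbound hsummable hsum
    exact ⟨hKstar.integralOperator p, hKstar.isIntegralOperator, IsIntegralOperator.hasSum
      (fun j ↦ (hK j).const_smul (k ^ j)) hKstar.isIntegralOperator hbound hsummable hsum⟩

/-- There is a sequence `K*_j` of bounded linear operators on
`L²(S², σ; ℂ)`, given by the kernels `−(i^j (j−1)/(4π j!)) |x−y|^{j−3} ⟨x−y, x⟩`, which
is uniformly bounded in operator norm, and such that for every `k ∈ ℂ` the series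
`∑ k^j K*_j` converges in operator norm to the Neumann–Poincaré operator `K^{k,*}` with
kernel `⟨∇G^k(x−y), ν_x⟩`, `ν_x = x`. -/
theorem neumann_poincare_operator_norm_expansion :
    ∃ K : ℕ → (Lp ℂ 2 sphMeasure →L[ℂ] Lp ℂ 2 sphMeasure),
      (∀ j : ℕ, ∀ f : Lp ℂ 2 sphMeasure, ∀ᵐ x ∂sphMeasure,
        K j f x = -(Complex.I ^ j * ((j : ℂ) - 1) / (4 * Real.pi * (Nat.factorial j : ℂ))) *
          ∫ y, ((‖x - y‖ ^ ((j : ℤ) - 3) : ℝ) : ℂ) * ((⟪x - y, x⟫ : ℝ) : ℂ) * f y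
            ∂sphMeasure) ∧
      (∃ C : ℝ, ∀ j : ℕ, ‖K j‖ ≤ C) ∧
      (∀ k : ℂ, ∃ Kstar : Lp ℂ 2 sphMeasure →L[ℂ] Lp ℂ 2 sphMeasure,
        (∀ f : Lp ℂ 2 sphMeasure, ∀ᵐ x ∂sphMeasure,
          Kstar f x = ∫ y, (∑ i : Fin 3, gradG k (x - y) i * (x i : ℂ)) * f y
            ∂sphMeasure) ∧
        Filter.Tendsto (fun n => ∑ j ∈ Finset.range n, k ^ j • K j)
          Filter.atTop (nhds Kstar)) := by
  obtain ⟨K, hK, hbounded, hsum⟩ := neumann_poincare_operator_norm_expansion_general 2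
  refine ⟨K, fun j f ↦ (hK j f).mono fun x hx ↦ ?_, hbounded, fun k ↦ ?_⟩
  · simp only [hx.2, coeffKernel, mul_assoc, integral_const_mul]
  · obtain ⟨Kstar, hKstar, hlim⟩ := hsum k
    exact ⟨Kstar, fun f ↦ (hKstar f).mono fun x hx ↦ hx.2, hlim.tendsto_sum_nat⟩
end
end
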